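/- There exists a universal constant c > 0 with the following property (signal strengthening). For all real numbers γ ≥ θ > 0 and every finite γ-feasible set S of links (under any power assignment), S can be partitioned into at most c·(γ/θ)² sets, each of which is θ-feasible. -/

import Mathlib

open Finset MeasureTheory
open scoped Classical

/-- A wireless link: an ordered sender–receiver pair of points in a metric space. -/
structure Link (X : Type*) where
  sender : X
  receiver : X

variable {X : Type*} [MetricSpace X]

/-- The length `ℓ_v` of a link. -/
noncomputable def linkLen (v : Link X) : ℝ := dist v.sender v.receiver

/-- The asymmetric distance `d_{wv}` from the sender of `w` to the receiver of `v`. -/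
noncomputable def linkDist (w v : Link X) : ℝ := dist w.sender v.receiver

/-- The constant `c_v = β/(1 - β N ℓ_v^α / P_v)`. -/
noncomputable def cConst (α β N : ℝ) (pw : Link X → ℝ) (v : Link X) : ℝ :=
  β / (1 - β * N * linkLen v ^ α / pw v)

/-- The (thresholded) affectance `a_w(v)` of link `w` on link `v`. -/
noncomputable def aff (α β N : ℝ) (pw : Link X → ℝ) (w v : Link X) : ℝ :=
  if w = v then 0
  else min 1 (cConst α β N pw v * (pw w / pw v) * (linkLen v / linkDist w v) ^ α)

/-- `a_S(v) = Σ_{w ∈ S} a_w(v)`. -/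
noncomputable def affIn (α β N : ℝ) (pw : Link X → ℝ) (S : Finset (Link X)) (v : Link X) : ℝ :=
  ∑ w ∈ S, aff α β N pw w v

/-- `a_v(S) = Σ_{w ∈ S} a_v(w)`. -/
noncomputable def affOut (α β N : ℝ) (pw : Link X → ℝ) (v : Link X) (S : Finset (Link X)) : ℝ :=
  ∑ w ∈ S, aff α β N pw v w

/-- First-fit colouring: if the incoming weight of every element of `S` is less than `m * η`, then
`S` has an `m`-colouring in which every element receives weight at most `η` from the elements of
its own colour that strictly precede it in the order induced by `r`. -/
theorem exists_coloring_sum_preceding_le {ι κ : Type*} [LinearOrder κ] (r : ι → κ)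
    (a : ι → ι → ℝ) (ha : ∀ w v, 0 ≤ a w v) {η : ℝ} {m : ℕ} (S : Finset ι)
    (hS : ∀ v ∈ S, ∑ w ∈ S, a w v < m * η) :
    ∃ f : ι → ℕ, ∀ v ∈ S, f v < m ∧ ∑ w ∈ S with r w < r v ∧ f w = f v, a w v ≤ η := by
  induction S using Finset.induction_on_max_value r with
  | empty => exact ⟨fun _ => 0, by simp⟩
  | insert x s hx hmax ih =>
    have hle : ∀ v, ∑ w ∈ s, a w v ≤ ∑ w ∈ insert x s, a w v := fun v =>
      Finset.sum_le_sum_of_subset_of_nonneg (Finset.subset_insert x s) fun w _ _ => ha w v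
    obtain ⟨f, hf⟩ := ih fun v hv => (hle v).trans_lt (hS v (Finset.mem_insert_of_mem hv))
    obtain ⟨i, him, hi⟩ : ∃ i < m, ∑ w ∈ s with f w = i, a w x ≤ η := by
      by_contra! hcon
      have hfib : ∑ i ∈ Finset.range m, ∑ w ∈ s with f w = i, a w x = ∑ w ∈ s, a w x :=
        Finset.sum_fiberwise_of_maps_to (fun w hw => Finset.mem_range.2 (hf w hw).1) _
      have hlow : (m : ℝ) * η ≤ ∑ i ∈ Finset.range m, ∑ w ∈ s with f w = i, a w x := by
        have := Finset.card_nsmul_le_sum (Finset.range m)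
          (fun i => ∑ w ∈ s with f w = i, a w x) η fun i hi => (hcon i (Finset.mem_range.1 hi)).le
        simpa using this
      linarith [hle x, hS x (Finset.mem_insert_self x s)]
    have hne : ∀ w ∈ s, w ≠ x := fun w hw h => hx (h ▸ hw)
    refine ⟨Function.update f x i, fun v hv => ?_⟩
    rcases Finset.mem_insert.1 hv with rfl | hvs
    · refine ⟨by simpa using him, le_trans ?_ hi⟩
      refine Finset.sum_le_sum_of_subset_of_nonneg (fun w hw => ?_) fun w _ _ => ha w _
      simp only [Finset.mem_filter, Finset.mem_insert, Function.update_self] at hw ⊢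
      obtain ⟨rfl | hw, hlt, hwi⟩ := hw
      · exact absurd hlt (lt_irrefl _)
      · exact ⟨hw, by rwa [Function.update_of_ne (hne w hw)] at hwi⟩
    · rw [Function.update_of_ne (hne v hvs)]
      refine ⟨(hf v hvs).1, le_trans ?_ (hf v hvs).2⟩
      refine Finset.sum_le_sum_of_subset_of_nonneg (fun w hw => ?_) fun w _ _ => ha w _
      simp only [Finset.mem_filter, Finset.mem_insert] at hw ⊢
      obtain ⟨rfl | hw, hlt, hwi⟩ := hw
      · exact absurd hlt (not_lt.2 (hmax v hvs))
      · exact ⟨hw, hlt, by rwa [Function.update_of_ne (hne w hw)] at hwi⟩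

/-- Combining the first-fit colourings for an order and its reverse gives a colouring with `m * m`
colours in which every element receives weight at most `η + η` from its own colour class. -/
theorem exists_coloring_sum_class_le {ι : Type*} (a : ι → ι → ℝ) (S : Finset ι)
    (ha : ∀ w v, 0 ≤ a w v) (hself : ∀ v, a v v = 0) {η : ℝ} {m : ℕ}
    (hS : ∀ v ∈ S, ∑ w ∈ S, a w v < m * η) :
    ∃ f : ι → ℕ, ∀ v ∈ S, f v < m * m ∧ ∑ w ∈ S with f w = f v, a w v ≤ η + η := by
  let r : ι → ℕ := fun w => S.toList.idxOf w
  have hr : ∀ w ∈ S, ∀ v, r w = r v → w = v := fun w hw v h =>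
    (List.idxOf_inj (Finset.mem_toList.2 hw)).1 h
  obtain ⟨f, hf⟩ := exists_coloring_sum_preceding_le r a ha S hS
  obtain ⟨g, hg⟩ := exists_coloring_sum_preceding_le (fun w => OrderDual.toDual (r w)) a ha S hS
  have hpair : ∀ w ∈ S, ∀ v ∈ S, m * f w + g w = m * f v + g v → f w = f v ∧ g w = g v := by
    intro w hw v hv h
    have hm : 0 < m := (Nat.zero_le _).trans_lt (hg v hv).1
    have hdiv := congrArg (· / m) h
    have hmod := congrArg (· % m) h
    simp only [Nat.mul_add_div hm, Nat.div_eq_of_lt (hg w hw).1, Nat.div_eq_of_lt (hg v hv).1,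
      add_zero] at hdiv
    simp only [Nat.mul_add_mod, Nat.mod_eq_of_lt (hg w hw).1,
      Nat.mod_eq_of_lt (hg v hv).1] at hmod
    exact ⟨hdiv, hmod⟩
  refine ⟨fun w => m * f w + g w, fun v hv => ⟨?_, ?_⟩⟩
  · calc m * f v + g v < m * f v + m := by have := (hg v hv).1; omega
      _ = m * (f v + 1) := by ring
      _ ≤ m * m := Nat.mul_le_mul_left m (hf v hv).1
  · refine le_trans ?_ (add_le_add (hf v hv).2 (hg v hv).2)
    simp only [Finset.sum_filter, ← Finset.sum_add_distrib]
    refine Finset.sum_le_sum fun w hw => ?_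
    by_cases h : m * f w + g w = m * f v + g v
    · obtain ⟨h1, h2⟩ := hpair w hw v hv h
      rcases lt_trichotomy (r w) (r v) with hlt | heq | hgt
      · simp [h1, h2, hlt, hlt.not_gt]
      · obtain rfl := hr w hw v heq
        simp [hself]
      · simp [h1, h2, hgt, hgt.not_gt]
    · rw [if_neg h]
      apply add_nonneg <;> split_ifs <;> simp [ha]

/-- Affectance is nonnegative between links of positive power when the affected link satisfies the
power constraint. -/
theorem aff_nonneg {α β N : ℝ} {pw : Link X → ℝ} {w v : Link X} (hβ : 0 ≤ β)
    (hw : 0 < pw w) (hv : 0 < pw v) (hN : β * N * linkLen v ^ α < pw v) :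
    0 ≤ aff α β N pw w v := by
  have hc : 0 ≤ cConst α β N pw v :=
    div_nonneg hβ (sub_nonneg.2 ((div_le_one hv).2 hN.le))
  have hrpow : 0 ≤ (linkLen v / linkDist w v) ^ α :=
    Real.rpow_nonneg (div_nonneg dist_nonneg dist_nonneg) α
  unfold aff
  split_ifs
  · exact le_rfl
  · exact le_min zero_le_one (mul_nonneg (mul_nonneg hc (div_pos hw hv).le) hrpow)

/-- **signal strengthening.** There is a universal constant `c > 0` such
that for all `γ ≥ θ > 0`, every finite `γ`-feasible set `S` of links (under any power
assignment) can be partitioned into at most `c (γ/θ)²` sets, each `θ`-feasible. The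
partition is encoded by a colouring `f` of the links of `S` with fewer than `k` colours. -/
theorem stmt_13 :
    ∃ c : ℝ, 0 < c ∧
      ∀ (X : Type*) [MetricSpace X] (α β N : ℝ) (pw : Link X → ℝ)
        (S : Finset (Link X)) (γ θ : ℝ),
        0 < α → 0 < β → 0 ≤ N →
        (∀ v ∈ S, 0 < linkLen v) →
        (∀ v ∈ S, 0 < pw v) →
        (∀ v ∈ S, β * N * linkLen v ^ α < pw v) →
        (∀ v ∈ S, ∀ w ∈ S, w ≠ v → 0 < linkDist w v) →
        0 < θ → θ ≤ γ →
        (∀ v ∈ S, affIn α β N pw S v ≤ γ) →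
        ∃ (k : ℕ) (f : Link X → ℕ),
          (k : ℝ) ≤ c * (γ / θ) ^ 2 ∧
          (∀ v ∈ S, f v < k) ∧
          ∀ i : ℕ, ∀ v ∈ S.filter (fun w => f w = i),
            affIn α β N pw (S.filter (fun w => f w = i)) v ≤ θ := by
  refine ⟨9, by norm_num, ?_⟩
  intro X _ α β N pw S γ θ _ hβ _ _ hpw hN _ hθ hγ hS
  -- Only the affectances inside `S` are known to be nonnegative, so truncate the others.
  let a : Link X → Link X → ℝ := fun w v => max 0 (aff α β N pw w v)
  have ha_eq : ∀ w ∈ S, ∀ v ∈ S, a w v = aff α β N pw w v := fun w hw v hv =>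
    max_eq_right (aff_nonneg hβ.le (hpw w hw) (hpw v hv) (hN v hv))
  have hsum : ∀ v ∈ S, ∀ T ⊆ S, ∑ w ∈ T, a w v = affIn α β N pw T v := fun v hv T hT =>
    Finset.sum_congr rfl fun w hw => ha_eq w (hT hw) v hv
  have hratio : 1 ≤ γ / θ := (one_le_div hθ).2 hγ
  let m : ℕ := ⌊2 * (γ / θ)⌋₊ + 1
  have hm_gt : 2 * (γ / θ) < (m : ℝ) := by
    simpa [m] using Nat.lt_floor_add_one (2 * (γ / θ))
  have hm_le : (m : ℝ) ≤ 3 * (γ / θ) := by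
    have := Nat.floor_le (show 0 ≤ 2 * (γ / θ) by positivity)
    push_cast [m]
    linarith
  have hγm : γ < m * (θ / 2) := by
    calc γ = 2 * (γ / θ) * (θ / 2) := by field_simp
      _ < m * (θ / 2) := by gcongr
  obtain ⟨f, hf⟩ := exists_coloring_sum_class_le a S (η := θ / 2) (m := m)
    (fun w v => le_max_left _ _) (fun v => by simp [a, aff])
    (fun v hv => ((hsum v hv S subset_rfl).trans_le (hS v hv)).trans_lt hγm)
  refine ⟨m * m, f, ?_, fun v hv => (hf v hv).1, fun i v hv => ?_⟩
  · push_cast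
    nlinarith [Nat.cast_nonneg (α := ℝ) m]
  · obtain ⟨hvS, rfl⟩ := Finset.mem_filter.1 hv
    rw [← hsum v hvS _ (Finset.filter_subset _ _)]
    exact (hf v hvS).2.trans_eq (add_halves θ)
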